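/- Let n ≥ 2 and let A be an associative ring. Let s, c ∈ A be central with s² + c² = 1; let δ ∈ A satisfy δ² = 0, δ central except that δ·θ^e_i = −θ^e_i·δ for all i; for 2 ≤ i ≤ n let u^e_i ∈ A be central and θ^e_i ∈ A satisfy θ^e_i·θ^e_j = −θ^e_j·θ^e_i for i ≠ j and (θ^e_i)² = 0; and for 2 ≤ i, j ≤ n let Ω_{ij} ∈ A be central with Ω_{ij} = −Ω_{ji}; assume moreover that s, c, the u^e_i and the Ω_{ij} commute with δ and with all θ^e_i. Set u_1 = c, u_i = s·u^e_i for 2 ≤ i ≤ n; θ_1 = −s·δ, θ_i = s·θ^e_i + c·δ·u^e_i for 2 ≤ i ≤ n; and Ω_{1j} = Ω_{j1} = 0. For 0 ≤ k ≤ ⌊(n−1)/2⌋ define Φ_k = Σ_{τ ∈ S_n} sgn(τ)·u_{τ(1)}·θ_{τ(2)}·⋯·θ_{τ(n−2k)}·Ω_{τ(n−2k+1)τ(n−2k+2)}·⋯·Ω_{τ(n−1)τ(n)}, and, summing over all permutations ρ of {2,…,n}, Ψ^e_k = Σ_ρ sgn(ρ)·θ^e_{ρ(2)}·⋯·θ^e_{ρ(n−2k)}·Ω_{ρ(n−2k+1)ρ(n−2k+2)}·⋯·Ω_{ρ(n−1)ρ(n)}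 and Φ^e_k = Σ_ρ sgn(ρ)·u^e_{ρ(2)}·θ^e_{ρ(3)}·⋯·θ^e_{ρ(n−2k)}·Ω_{ρ(n−2k+1)ρ(n−2k+2)}·⋯·Ω_{ρ(n−1)ρ(n)} (the latter for 0 ≤ k ≤ ⌊(n−2)/2⌋). Then for 0 ≤ k ≤ ⌊(n−2)/2⌋ one has Φ_k = s^{n−2k−1}·c·Ψ^e_k + (n−2k−1)·s^{n−2k−2}·δ·Φ^e_k, and if n is odd then Φ_{(n−1)/2} = c·Ψ^e_{(n−1)/2}. -/

import Mathlib

open Finset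

/-- The embedding `Fin (n-1) → Fin n` onto the indices `{1, …, n-1}` (i.e. `{2, …, n}`
in 1-indexed notation). -/
def embSucc (n : ℕ) : Fin (n - 1) → Fin n :=
  fun j => ⟨(j : ℕ) + 1, by have := j.isLt; omega⟩

/-- `Φ_k = Σ_{τ ∈ Sₙ} sgn(τ)·u_{τ(1)}·θ_{τ(2)}⋯θ_{τ(n−2k)}·Ω_{τ(n−2k+1)τ(n−2k+2)}⋯Ω_{τ(n−1)τ(n)}`
(written 0-indexed: `u` at position `0`, then `n−2k−1` θ's, then `k` Ω's). -/
def chernPhi {A : Type*} [Ring A] (n k : ℕ) (hk : 2 * k + 1 ≤ n)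
    (u θ : Fin n → A) (Ω : Fin n → Fin n → A) : A :=
  ∑ τ : Equiv.Perm (Fin n), (Equiv.Perm.sign τ : ℤ) •
    (u (τ ⟨0, by omega⟩) *
      ((List.ofFn fun i => θ (τ i)).tail.take (n - 2 * k - 1)).prod *
      (List.ofFn fun j : Fin k =>
        Ω (τ ⟨n - 2 * k + 2 * (j : ℕ), by have := j.isLt; omega⟩)
          (τ ⟨n - 2 * k + 2 * (j : ℕ) + 1, by have := j.isLt; omega⟩)).prod)

/-- `Ψ-type sums: Σ_{ρ ∈ S_m} sgn(ρ)·θ_{ρ(1)}⋯θ_{ρ(m−2k)}·Ω_{ρ(m−2k+1)ρ(m−2k+2)}⋯Ω_{ρ(m−1)ρ(m)}`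
(written 0-indexed: `m−2k` θ's, then `k` Ω's). -/
def chernPsi {A : Type*} [Ring A] (m k : ℕ) (hk : 2 * k ≤ m)
    (θ : Fin m → A) (Ω : Fin m → Fin m → A) : A :=
  ∑ ρ : Equiv.Perm (Fin m), (Equiv.Perm.sign ρ : ℤ) •
    (((List.ofFn fun i => θ (ρ i)).take (m - 2 * k)).prod *
      (List.ofFn fun j : Fin k =>
        Ω (ρ ⟨m - 2 * k + 2 * (j : ℕ), by have := j.isLt; omega⟩)
          (ρ ⟨m - 2 * k + 2 * (j : ℕ) + 1, by have := j.isLt; omega⟩)).prod)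

/-!
Sort the permutations in `Φ_k` by the position of the index `0`. At the `u`-position it contributes
`c * Ψ_k(θ)`; at each of the `n - 2k - 1` `θ`-positions, after moving `θ₀ = -s * δ` to the front, it
contributes the same term `s * δ * Φ_k(u, θ)`; at an `Ω`-position it contributes `0`. Here `Ψ_k` and
`Φ_k` run over the remaining indices. As `δ² = 0`, replacing `s * θᵉ` by
`θ = s * θᵉ + δ * (c * uᵉ)` does not affect products with `δ`, while `Ψ_k(θ)` is affine in `uᵉ`: in
each linear term one `θ`-slot carries `uᵉ`, so that the linear part is a multiple of `δ * Φᵉ_k`. The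
two contributions to the coefficient of `δ * Φᵉ_k` carry the factors `c²` and `s²`, which add up to
`1`.
-/

section OrderedProducts

variable {A : Type*} [Ring A] {n : ℕ}

theorem prod_ofFn_mul_left {s : A} {x : Fin n → A} (hs : ∀ i, Commute s (x i)) :
    (List.ofFn fun i => s * x i).prod = s ^ n * (List.ofFn x).prod := by
  induction n with
  | zero => simp
  | succ n ih =>
    simp only [List.ofFn_succ, List.prod_cons, ih fun i => hs i.succ]
    rw [mul_assoc, ((hs 0).symm.pow_right n).left_comm, ← mul_assoc, ← pow_succ']

theorem prod_ofFn_eq_neg_one_pow_smul {f : Fin (n + 1) → A} (q : Fin (n + 1))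
    (hf : ∀ j, f q * f (q.succAbove j) = -(f (q.succAbove j) * f q)) :
    (List.ofFn f).prod
      = (-1 : ℤ) ^ (q : ℕ) • (f q * (List.ofFn fun j => f (q.succAbove j)).prod) := by
  induction n with
  | zero => simp [Fin.fin_one_eq_zero q]
  | succ n ih =>
    cases q using Fin.cases with
    | zero => simp [List.ofFn_succ]
    | succ q =>
      have hq : ∀ j, f q.succ * f (q.succAbove j).succ
          = -(f (q.succAbove j).succ * f q.succ) := fun j => by
        simpa using hf j.succ
      have h0 : f 0 * f q.succ = -(f q.succ * f 0) := by
        simpa using (neg_eq_iff_eq_neg.2 (hf 0)).symm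
      rw [List.ofFn_succ, List.prod_cons, ih (f := fun i => f i.succ) q hq, mul_smul_comm,
        ← mul_assoc, h0]
      simp [List.ofFn_succ, pow_succ, mul_assoc]

theorem mul_prod_ofFn_add_mul {δ : A} {x y : Fin n → A} (hδ : δ * δ = 0)
    (hδx : ∀ i, δ * x i = -(x i * δ)) :
    δ * (List.ofFn fun i => x i + δ * y i).prod = δ * (List.ofFn x).prod := by
  induction n with
  | zero => simp
  | succ n ih =>
    have h0 : δ * (x 0 + δ * y 0) = -(x 0 * δ) := by
      rw [mul_add, ← mul_assoc, hδ, zero_mul, add_zero, hδx]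
    rw [List.ofFn_succ, List.ofFn_succ, List.prod_cons, List.prod_cons, ← mul_assoc, h0,
      neg_mul, mul_assoc, ih fun i => hδx i.succ, ← mul_assoc, ← mul_assoc, hδx, neg_mul]

theorem prod_ofFn_add_mul {δ : A} {x y : Fin (n + 1) → A} (hδ : δ * δ = 0)
    (hδx : ∀ i, δ * x i = -(x i * δ)) (hδy : ∀ i, Commute δ (y i))
    (hxy : ∀ i j, Commute (x i) (y j)) :
    (List.ofFn fun i => x i + δ * y i).prod = (List.ofFn x).prod + ∑ q : Fin (n + 1),
      (-1 : ℤ) ^ (q : ℕ) • (δ * (y q * (List.ofFn fun j => x (q.succAbove j)).prod)) := by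
  induction n with
  | zero => simp
  | succ n ih =>
    have hhead : δ * y 0 * (List.ofFn fun i : Fin (n + 1) => x i.succ + δ * y i.succ).prod
        = δ * (y 0 * (List.ofFn fun i : Fin (n + 1) => x i.succ).prod) := by
      rw [(hδy 0).eq, mul_assoc, mul_prod_ofFn_add_mul hδ fun i => hδx i.succ,
        (hδy 0).symm.left_comm]
    have htail : ∀ (q : Fin (n + 1)) (P : A),
        x 0 * (δ * (y q.succ * P)) = -(δ * (y q.succ * (x 0 * P))) := fun q P => by
      rw [← mul_assoc, ← neg_neg (x 0 * δ), ← hδx, neg_mul, mul_assoc, (hxy 0 _).left_comm]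
    rw [List.ofFn_succ, List.prod_cons, add_mul, hhead,
      ih (fun i => hδx _) (fun i => hδy _) (fun i j => hxy _ _), Fin.sum_univ_succ (n := n + 1),
      mul_add, mul_sum, add_assoc, add_comm (∑ _, _)]
    simp only [mul_smul_comm, htail]
    simp [List.ofFn_succ, pow_succ]

end OrderedProducts

section CurvatureProducts

variable {A ι : Type*} [Ring A] {n k : ℕ}

/-- The product of the `k` curvature forms carried by the last `2 * k` of the indices
`τ 0, …, τ (n - 1)`, paired consecutively: the common tail of the summands of `chernPhi` and
`chernPsi`. -/
def curvatureProd (k : ℕ) (hk : 2 * k ≤ n) (Ω : ι → ι → A) (τ : Fin n → ι) : A :=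
  (List.ofFn fun j : Fin k =>
    Ω (τ ⟨n - 2 * k + 2 * (j : ℕ), by have := j.isLt; omega⟩)
      (τ ⟨n - 2 * k + 2 * (j : ℕ) + 1, by have := j.isLt; omega⟩)).prod

theorem curvatureProd_congr (hk : 2 * k ≤ n) (Ω : ι → ι → A) {τ σ : Fin n → ι}
    (h : ∀ i : Fin n, n - 2 * k ≤ i → τ i = σ i) :
    curvatureProd k hk Ω τ = curvatureProd k hk Ω σ := by
  unfold curvatureProd
  congr 2
  funext j
  rw [h _ (Nat.le_add_right _ _), h _ (by simp only; omega)]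

theorem curvatureProd_succ (hk : 2 * k ≤ n) (Ω : ι → ι → A) (τ : Fin (n + 1) → ι) :
    curvatureProd k (Nat.le_succ_of_le hk) Ω τ = curvatureProd k hk Ω fun i => τ i.succ := by
  unfold curvatureProd
  congr 2
  funext j
  congr 2 <;> ext <;> simp only [Fin.val_succ] <;> omega

theorem curvatureProd_eq_zero (hk : 2 * k ≤ n) {Ω : ι → ι → A} {τ : Fin n → ι} {p : Fin n}
    (hp : n - 2 * k ≤ p) (hΩ : ∀ i, Ω (τ p) i = 0 ∧ Ω i (τ p) = 0) :
    curvatureProd k hk Ω τ = 0 := by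
  refine List.prod_eq_zero (List.mem_ofFn.2 ⟨⟨(p - (n - 2 * k)) / 2, by omega⟩, ?_⟩)
  rcases Nat.mod_two_eq_zero_or_one (p - (n - 2 * k)) with hpar | hpar
  · convert (hΩ _).1 using 3
    ext
    simp only
    omega
  · convert (hΩ _).2 using 3
    ext
    simp only
    omega

end CurvatureProducts

section Permutations

variable {m : ℕ}

/-- The permutation of `Fin (m + 1)` whose word is that of `e`, with all letters raised by one and
the letter `0` inserted at position `p`. -/
def insertZeroPerm (p : Fin (m + 1)) (e : Equiv.Perm (Fin m)) : Equiv.Perm (Fin (m + 1)) :=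
  Equiv.Perm.decomposeFin.symm (0, e) * p.cycleRange

theorem insertZeroPerm_apply_self (p : Fin (m + 1)) (e : Equiv.Perm (Fin m)) :
    insertZeroPerm p e p = 0 := by
  simp [insertZeroPerm]

theorem insertZeroPerm_apply_succAbove (p : Fin (m + 1)) (e : Equiv.Perm (Fin m)) (j : Fin m) :
    insertZeroPerm p e (p.succAbove j) = (e j).succ := by
  simp [insertZeroPerm]

theorem sign_insertZeroPerm (p : Fin (m + 1)) (e : Equiv.Perm (Fin m)) :
    Equiv.Perm.sign (insertZeroPerm p e) = (-1) ^ (p : ℕ) * Equiv.Perm.sign e := by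
  simp [insertZeroPerm, mul_comm]

theorem bijective_insertZeroPerm :
    Function.Bijective fun pe : Fin (m + 1) × Equiv.Perm (Fin m) =>
      insertZeroPerm pe.1 pe.2 := by
  refine (Fintype.bijective_iff_injective_and_card _).2 ⟨?_, ?_⟩
  · rintro ⟨p, e⟩ ⟨p', e'⟩ h
    dsimp only at h
    obtain rfl : p = p' := (insertZeroPerm p e).injective <| by
      rw [insertZeroPerm_apply_self, h, insertZeroPerm_apply_self]
    obtain rfl : e = e' := Equiv.ext fun j => Fin.succ_injective _ <| by
      rw [← insertZeroPerm_apply_succAbove p, h, insertZeroPerm_apply_succAbove]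
    rfl
  · simp [Fintype.card_perm, Nat.factorial_succ]

theorem sum_perm_succ_eq_sum_insertZeroPerm {M : Type*} [AddCommGroup M]
    (F : Equiv.Perm (Fin (m + 1)) → M) :
    ∑ τ, (Equiv.Perm.sign τ : ℤ) • F τ = ∑ p : Fin (m + 1), (-1 : ℤ) ^ (p : ℕ) •
      ∑ e : Equiv.Perm (Fin m), (Equiv.Perm.sign e : ℤ) • F (insertZeroPerm p e) := by
  rw [← bijective_insertZeroPerm.sum_comp, Fintype.sum_prod_type]
  simp [sign_insertZeroPerm, smul_sum, mul_smul]

theorem sum_perm_mul_cycleRange {M : Type*} [AddCommGroup M] (q : Fin m)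
    (F : Equiv.Perm (Fin m) → M) :
    ∑ e, (Equiv.Perm.sign e : ℤ) • F (e * q.cycleRange)
      = (-1 : ℤ) ^ (q : ℕ) • ∑ e, (Equiv.Perm.sign e : ℤ) • F e := by
  rw [← Equiv.sum_comp (Equiv.mulRight q.cycleRange) fun e => (Equiv.Perm.sign e : ℤ) • F e,
    smul_sum]
  simp [smul_smul, mul_left_comm ((-1 : ℤ) ^ (q : ℕ)), ← mul_pow]

theorem castLE_succAbove {r : ℕ} (h : r + 1 ≤ m + 1) (q : Fin (r + 1)) (j : Fin r) :
    Fin.castLE h (q.succAbove j)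
      = (Fin.castLE h q).succAbove (Fin.castLE (Nat.le_of_succ_le_succ h) j) := by
  ext
  simp only [Fin.succAbove, Fin.lt_def, Fin.val_castLE, Fin.val_castSucc]
  split_ifs <;> simp

end Permutations

section ChernForms

variable {A : Type*} [Ring A] {m k r : ℕ}

theorem chernPsi_eq_sum (hr : r + 2 * k = m) (θ : Fin m → A) (Ω : Fin m → Fin m → A) :
    chernPsi m k (by omega) θ Ω = ∑ ρ : Equiv.Perm (Fin m), (Equiv.Perm.sign ρ : ℤ) •
      ((List.ofFn fun i : Fin r => θ (ρ (Fin.castLE (by omega) i))).prod *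
        curvatureProd k (by omega) Ω ρ) := by
  obtain rfl : r = m - 2 * k := by omega
  refine Fintype.sum_congr _ _ fun ρ => ?_
  rw [← Fin.ofFn_take_eq_take_ofFn (Nat.sub_le _ _)]
  rfl

theorem chernPhi_eq_sum (hr : r + 2 * k = m) (u θ : Fin (m + 1) → A)
    (Ω : Fin (m + 1) → Fin (m + 1) → A) :
    chernPhi (m + 1) k (by omega) u θ Ω
      = ∑ τ : Equiv.Perm (Fin (m + 1)), (Equiv.Perm.sign τ : ℤ) •
        (u (τ 0) * (List.ofFn fun i : Fin r => θ (τ (Fin.castLE (by omega) i).succ)).prod *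
          curvatureProd k (by omega) Ω τ) := by
  obtain rfl : r = m + 1 - 2 * k - 1 := by omega
  refine Fintype.sum_congr _ _ fun τ => ?_
  rw [List.ofFn_succ, List.tail_cons, ← Fin.ofFn_take_eq_take_ofFn (by omega)]
  rfl

variable {s δ : A} {x y : Fin m → A}

theorem chernPsi_mul_left (hk : 2 * k ≤ m) (hs : ∀ i, Commute s (x i))
    (Ω : Fin m → Fin m → A) :
    chernPsi m k hk (fun i => s * x i) Ω = s ^ (m - 2 * k) * chernPsi m k hk x Ω := by
  have hr : m - 2 * k + 2 * k = m := by omega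
  simp only [chernPsi_eq_sum hr, mul_sum, prod_ofFn_mul_left fun _ => hs _, mul_smul_comm,
    mul_assoc]

theorem chernPhi_mul_left (hk : 2 * k + 1 ≤ m) (a : A) {u : Fin m → A}
    (hu : ∀ i, Commute s (u i)) (hs : ∀ i, Commute s (x i)) (Ω : Fin m → Fin m → A) :
    chernPhi m k hk (fun i => a * u i) (fun i => s * x i) Ω
      = a * s ^ (m - 2 * k - 1) * chernPhi m k hk u x Ω := by
  obtain ⟨r, rfl⟩ : ∃ r, m = r + 2 * k + 1 := ⟨m - 2 * k - 1, by omega⟩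
  have hexp : r + 2 * k + 1 - 2 * k - 1 = r := by omega
  simp only [chernPhi_eq_sum rfl, hexp, mul_sum, prod_ofFn_mul_left fun _ => hs _, mul_smul_comm,
    mul_assoc, ((hu _).symm.pow_right r).left_comm]

theorem mul_chernPhi_add_mul (hk : 2 * k + 1 ≤ m) {u : Fin m → A} (hδ : δ * δ = 0)
    (hδu : ∀ i, Commute δ (u i)) (hδx : ∀ i, δ * x i = -(x i * δ)) (Ω : Fin m → Fin m → A) :
    δ * chernPhi m k hk u (fun i => x i + δ * y i) Ω = δ * chernPhi m k hk u x Ω := by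
  obtain ⟨r, rfl⟩ : ∃ r, m = r + 2 * k + 1 := ⟨m - 2 * k - 1, by omega⟩
  simp only [chernPhi_eq_sum rfl, mul_sum, mul_smul_comm, ← mul_assoc, (hδu _).eq]
  simp only [mul_assoc _ δ, mul_prod_ofFn_add_mul hδ fun _ => hδx _]

theorem chernPhi_eq_sum_succAbove (hr : r + 2 * k = m) (q : Fin (r + 1))
    (u θ : Fin (m + 1) → A) (Ω : Fin (m + 1) → Fin (m + 1) → A) :
    chernPhi (m + 1) k (by omega) u θ Ω
      = (-1 : ℤ) ^ (q : ℕ) • ∑ ρ : Equiv.Perm (Fin (m + 1)), (Equiv.Perm.sign ρ : ℤ) •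
        (u (ρ (Fin.castLE (by omega) q)) *
            (List.ofFn fun j : Fin r => θ (ρ (Fin.castLE (by omega) (q.succAbove j)))).prod *
          curvatureProd k (by omega) Ω ρ) := by
  set p : Fin (m + 1) := Fin.castLE (by omega) q with hp
  have hW : ∀ ρ : Equiv.Perm (Fin (m + 1)),
      curvatureProd k (by omega) Ω (ρ * p.cycleRange : Equiv.Perm (Fin (m + 1)))
        = curvatureProd k (by omega) Ω ρ := fun ρ => curvatureProd_congr _ Ω fun i hi => by
    have hpi : p < i := by rw [Fin.lt_def, hp, Fin.val_castLE]; omega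
    rw [Equiv.Perm.mul_apply, Fin.cycleRange_of_gt hpi]
  rw [chernPhi_eq_sum hr]
  have hpq : (p : ℕ) = q := rfl
  rw [← hpq, ← sum_perm_mul_cycleRange p]
  simp only [hW, castLE_succAbove, ← hp, Equiv.Perm.mul_apply, Fin.cycleRange_self,
    Fin.cycleRange_succAbove]

theorem chernPsi_add_mul (hk : 2 * k + 1 ≤ m) (hδ : δ * δ = 0)
    (hδx : ∀ i, δ * x i = -(x i * δ)) (hδy : ∀ i, Commute δ (y i))
    (hxy : ∀ i j, Commute (x i) (y j)) (Ω : Fin m → Fin m → A) :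
    chernPsi m k (Nat.le_of_succ_le hk) (fun i => x i + δ * y i) Ω
      = chernPsi m k (Nat.le_of_succ_le hk) x Ω
        + (m - 2 * k) • (δ * chernPhi m k hk y x Ω) := by
  obtain ⟨r, rfl⟩ : ∃ r, m = r + 2 * k + 1 := ⟨m - 2 * k - 1, by omega⟩
  have hr : r + 1 + 2 * k = r + 2 * k + 1 := by omega
  have hcard : r + 2 * k + 1 - 2 * k = r + 1 := by omega
  simp only [chernPsi_eq_sum hr, prod_ofFn_add_mul hδ (fun _ => hδx _) (fun _ => hδy _)
    fun _ _ => hxy _ _, add_mul, smul_add, sum_add_distrib]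
  congr 1
  calc _ = ∑ _ : Fin (r + 1), δ * chernPhi (r + 2 * k + 1) k hk y x Ω := by
        simp only [sum_mul, smul_sum]
        rw [sum_comm]
        refine Fintype.sum_congr _ _ fun q => ?_
        simp only [chernPhi_eq_sum_succAbove rfl q, mul_smul_comm, smul_mul_assoc, mul_sum,
          mul_assoc, smul_sum, smul_comm ((-1 : ℤ) ^ (q : ℕ))]
    _ = _ := by simp [hcard]

theorem chernPhi_succ_eq_sum_insertZeroPerm (hr : r + 2 * k = m) (u θ : Fin (m + 1) → A)
    {Ω : Fin (m + 1) → Fin (m + 1) → A} (hΩ : ∀ j, Ω 0 j = 0 ∧ Ω j 0 = 0) :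
    chernPhi (m + 1) k (by omega) u θ Ω
      = u 0 * chernPsi m k (by omega) (fun i => θ i.succ) (fun i j => Ω i.succ j.succ)
        + ∑ q : Fin r, (-1 : ℤ) ^ ((q : ℕ) + 1) •
          ∑ e : Equiv.Perm (Fin m), (Equiv.Perm.sign e : ℤ) •
            (u (insertZeroPerm (Fin.castLE (by omega) q).succ e 0) *
                (List.ofFn fun i : Fin r =>
                  θ (insertZeroPerm (Fin.castLE (by omega) q).succ e
                    (Fin.castLE (by omega) i).succ)).prod *
              curvatureProd k (by omega) (fun i j => Ω i.succ j.succ) e) := by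
  have hsucc : ∀ (e : Equiv.Perm (Fin m)) (i : Fin m), insertZeroPerm 0 e i.succ = (e i).succ :=
    fun e i => by rw [← Fin.succAbove_zero_apply, insertZeroPerm_apply_succAbove]
  have hW : ∀ (p : Fin (m + 1)), (p : ℕ) ≤ r → ∀ e : Equiv.Perm (Fin m),
      curvatureProd k (by omega) Ω (insertZeroPerm p e)
        = curvatureProd k (by omega) (fun i j => Ω i.succ j.succ) e := fun p hp e => by
    rw [curvatureProd_succ (by omega)]
    refine (curvatureProd_congr _ Ω (σ := fun i => (e i).succ) fun i hi => ?_).trans rfl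
    have hpi : p ≤ i.castSucc := by rw [Fin.le_def, Fin.val_castSucc]; omega
    rw [← Fin.succAbove_of_le_castSucc p i hpi, insertZeroPerm_apply_succAbove]
  have hW0 : ∀ (p : Fin (m + 1)), r < p → ∀ e : Equiv.Perm (Fin m),
      curvatureProd k (by omega) Ω (insertZeroPerm p e) = 0 := fun p hp e =>
    curvatureProd_eq_zero (p := p) _ (by omega) fun i => by
      rw [insertZeroPerm_apply_self]
      exact hΩ i
  rw [chernPhi_eq_sum hr, sum_perm_succ_eq_sum_insertZeroPerm, Fin.sum_univ_succ]
  congr 1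
  · simp only [chernPsi_eq_sum hr, hW 0 (Nat.zero_le _), insertZeroPerm_apply_self, hsucc,
      mul_sum, mul_smul_comm, mul_assoc, Fin.val_zero, pow_zero, one_smul]
  · refine (Fintype.sum_of_injective (Fin.castLE (by omega)) (Fin.castLE_injective _) _ _
      (fun q hq => ?_) fun q => ?_).symm
    · have hrq : r < q.succ := by
        rw [Fin.range_castLE] at hq
        simpa using Nat.lt_succ_of_le (not_lt.1 hq)
      simp only [hW0 _ hrq, mul_zero, smul_zero, sum_const_zero]
    · simp only [hW (Fin.castLE _ q).succ q.isLt, Fin.val_succ, Fin.val_castLE]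

theorem chernPhi_succ_self (u θ : Fin (2 * k + 1) → A)
    {Ω : Fin (2 * k + 1) → Fin (2 * k + 1) → A} (hΩ : ∀ j, Ω 0 j = 0 ∧ Ω j 0 = 0)
    (θ' : Fin (2 * k) → A) :
    chernPhi (2 * k + 1) k le_rfl u θ Ω
      = u 0 * chernPsi (2 * k) k le_rfl θ' (fun i j => Ω i.succ j.succ) := by
  have hr : 0 + 2 * k = 2 * k := zero_add _
  rw [chernPhi_succ_eq_sum_insertZeroPerm hr u θ hΩ, Fin.sum_univ_zero, add_zero]
  simp [chernPsi_eq_sum hr]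

theorem chernPhi_succ (hk : 2 * k + 1 ≤ m) {u θ : Fin (m + 1) → A}
    {Ω : Fin (m + 1) → Fin (m + 1) → A} (hu : ∀ i : Fin m, Commute (θ 0) (u i.succ))
    (hθ : ∀ i : Fin m, θ 0 * θ i.succ = -(θ i.succ * θ 0))
    (hΩ : ∀ j, Ω 0 j = 0 ∧ Ω j 0 = 0) :
    chernPhi (m + 1) k (Nat.le_succ_of_le hk) u θ Ω
      = u 0 * chernPsi m k (Nat.le_of_succ_le hk) (fun i => θ i.succ)
          (fun i j => Ω i.succ j.succ)
        - (m - 2 * k) • (θ 0 * chernPhi m k hk (fun i => u i.succ) (fun i => θ i.succ)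
          (fun i j => Ω i.succ j.succ)) := by
  obtain ⟨r, rfl⟩ : ∃ r, m = r + 2 * k + 1 := ⟨m - 2 * k - 1, by omega⟩
  have hcard : r + 2 * k + 1 - 2 * k = r + 1 := by omega
  have hpos : ∀ (q : Fin (r + 1)) (e : Equiv.Perm (Fin (r + 2 * k + 1))),
      insertZeroPerm (Fin.castLE (by omega) q).succ e 0 = (e 0).succ := fun q e => by
    rw [← Fin.succ_succAbove_zero, insertZeroPerm_apply_succAbove]
  have hsucc : ∀ (q : Fin (r + 1)) (e : Equiv.Perm (Fin (r + 2 * k + 1))) (j : Fin r),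
      insertZeroPerm (Fin.castLE (by omega) q).succ e
          (Fin.castLE (by omega) (q.succAbove j)).succ
        = (e (Fin.castLE (by omega) j).succ).succ := fun q e j => by
    rw [castLE_succAbove (by omega), ← Fin.succ_succAbove_succ, insertZeroPerm_apply_succAbove]
  have hprod : ∀ (q : Fin (r + 1)) (e : Equiv.Perm (Fin (r + 2 * k + 1))),
      (List.ofFn fun i : Fin (r + 1) => θ (insertZeroPerm (Fin.castLE (by omega) q).succ e
        (Fin.castLE (by omega) i).succ)).prod
      = (-1 : ℤ) ^ (q : ℕ) •
        (θ 0 * (List.ofFn fun j : Fin r => θ (e (Fin.castLE (by omega) j).succ).succ).prod) :=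
    fun q e => by
      rw [prod_ofFn_eq_neg_one_pow_smul q] <;>
        simp only [hsucc, insertZeroPerm_apply_self, hθ, implies_true]
  rw [chernPhi_succ_eq_sum_insertZeroPerm (r := r + 1) (by omega) u θ hΩ, sub_eq_add_neg]
  congr 1
  calc _ = ∑ _ : Fin (r + 1), -(θ 0 * chernPhi (r + 2 * k + 1) k hk (fun i => u i.succ)
          (fun i => θ i.succ) (fun i j => Ω i.succ j.succ)) := by
        refine Fintype.sum_congr _ _ fun q => ?_
        simp only [hpos, hprod, chernPhi_eq_sum rfl, mul_sum, mul_smul_comm, smul_mul_assoc,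
          mul_assoc, (hu _).left_comm, smul_comm _ ((-1 : ℤ) ^ (q : ℕ)), ← smul_sum]
        rw [smul_smul, pow_succ, ← mul_assoc, ← mul_pow]
        simp
    _ = _ := by simp [hcard]

end ChernForms

section PulledBackForms

variable {A : Type*} [Ring A] {m k : ℕ} {s c δ : A} {u x y : Fin m → A}

theorem chernPsi_mul_add_mul (hk : 2 * k + 1 ≤ m) (hsc : Commute s c) (hδ : δ * δ = 0)
    (hδs : Commute δ s) (hδc : Commute δ c) (hδx : ∀ i, δ * x i = -(x i * δ))
    (hδu : ∀ i, Commute δ (u i)) (hsu : ∀ i, Commute s (u i)) (hxs : ∀ i, Commute (x i) s)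
    (hxc : ∀ i, Commute (x i) c) (hxu : ∀ i j, Commute (x i) (u j)) (Ω : Fin m → Fin m → A) :
    chernPsi m k (Nat.le_of_succ_le hk) (fun i => s * x i + δ * (c * u i)) Ω
      = s ^ (m - 2 * k) * chernPsi m k (Nat.le_of_succ_le hk) x Ω
        + (m - 2 * k) • (δ * (c * s ^ (m - 2 * k - 1) * chernPhi m k hk u x Ω)) := by
  have hδsx : ∀ i, δ * (s * x i) = -(s * x i * δ) := fun i => by
    rw [hδs.left_comm, hδx, mul_neg, mul_assoc]
  have hsxcu : ∀ i j, Commute (s * x i) (c * u j) := fun i j =>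
    (hsc.mul_left (hxc i)).mul_right ((hsu j).mul_left (hxu i j))
  rw [chernPsi_add_mul hk hδ hδsx (fun i => hδc.mul_right (hδu i)) hsxcu,
    chernPsi_mul_left _ fun i => (hxs i).symm, chernPhi_mul_left hk c hsu fun i => (hxs i).symm]

theorem mul_chernPhi_mul_add_mul (hk : 2 * k + 1 ≤ m) (hδ : δ * δ = 0) (hδs : Commute δ s)
    (hδx : ∀ i, δ * x i = -(x i * δ)) (hδu : ∀ i, Commute δ (u i))
    (hsu : ∀ i, Commute s (u i)) (hxs : ∀ i, Commute (x i) s) (Ω : Fin m → Fin m → A) :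
    δ * chernPhi m k hk (fun i => s * u i) (fun i => s * x i + δ * y i) Ω
      = δ * (s * s ^ (m - 2 * k - 1) * chernPhi m k hk u x Ω) := by
  have hδsx : ∀ i, δ * (s * x i) = -(s * x i * δ) := fun i => by
    rw [hδs.left_comm, hδx, mul_neg, mul_assoc]
  rw [mul_chernPhi_add_mul hk hδ (fun i => hδs.mul_right (hδu i)) hδsx,
    chernPhi_mul_left hk s hsu fun i => (hxs i).symm]

theorem mul_mul_add_mul_eq_neg {z w : A} (hδ : δ * δ = 0) (hδs : Commute δ s)
    (hδz : δ * z = -(z * δ)) (hδw : Commute δ w) (hzs : Commute z s) :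
    s * δ * (s * z + δ * w) = -((s * z + δ * w) * (s * δ)) := by
  have hleft : s * δ * (s * z) = -(s * z * (s * δ)) := by
    rw [hδs.mul_mul_mul_comm, hzs.mul_mul_mul_comm, hδz, mul_neg]
  have hright : s * δ * (δ * w) = 0 := by
    rw [mul_assoc, ← mul_assoc δ, hδ, zero_mul, mul_zero]
  have hright' : δ * w * (s * δ) = 0 := by
    rw [hδw.eq, ← hδs.eq, mul_assoc, ← mul_assoc δ, hδ, zero_mul, mul_zero]
  rw [mul_add, add_mul, hright, hright', add_zero, add_zero, hleft]

end PulledBackForms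

theorem chernPhi_pullback_formula_general (m : ℕ) {A : Type*} [Ring A]
    (s c δ : A) (ue θe : Fin m → A) (Ω : Fin m → Fin m → A)
    (hs_c : Commute s c) (hsc : s ^ 2 + c ^ 2 = 1)
    (hδ2 : δ * δ = 0)
    (hδθe : ∀ i, δ * θe i = -(θe i * δ))
    (hδs : Commute δ s) (hδc : Commute δ c) (hδue : ∀ i, Commute δ (ue i))
    (hsue : ∀ i, Commute s (ue i))
    (hθes : ∀ i, Commute (θe i) s) (hθec : ∀ i, Commute (θe i) c)
    (hθeue : ∀ i j, Commute (θe i) (ue j))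
    (u θ : Fin (m + 1) → A) (Ω' : Fin (m + 1) → Fin (m + 1) → A)
    (hu0 : u 0 = c) (hui : ∀ i : Fin m, u i.succ = s * ue i)
    (hθ0 : θ 0 = -(s * δ)) (hθi : ∀ i : Fin m, θ i.succ = s * θe i + c * δ * ue i)
    (hΩ'0 : ∀ j, Ω' 0 j = 0 ∧ Ω' j 0 = 0)
    (hΩ'i : ∀ i j : Fin m, Ω' i.succ j.succ = Ω i j) :
    (∀ k, ∀ hk : 2 * k + 1 ≤ m,
      chernPhi (m + 1) k (by omega) u θ Ω'
        = s ^ (m - 2 * k) * c * chernPsi m k (by omega) θe Ω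
          + (m - 2 * k) • (s ^ (m - 2 * k - 1) * δ * chernPhi m k hk ue θe Ω)) ∧
    (∀ k, ∀ hk : m = 2 * k,
      chernPhi (m + 1) k (by omega) u θ Ω' = c * chernPsi m k (by omega) θe Ω) := by
  obtain rfl : (fun i j => Ω' i.succ j.succ) = Ω := funext₂ hΩ'i
  refine ⟨fun k hk => ?_, fun k hk => ?_⟩
  · have hθ_succ : ∀ i : Fin m, θ i.succ = s * θe i + δ * (c * ue i) := fun i => by
      rw [hθi, ← hδc.eq, mul_assoc]
    have hθ0u : ∀ i : Fin m, Commute (θ 0) (u i.succ) := fun i => by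
      rw [hθ0, hui]
      exact (((Commute.refl s).mul_right (hsue i)).mul_left
        (hδs.mul_right (hδue i))).neg_left
    have hθ0θ : ∀ i : Fin m, θ 0 * θ i.succ = -(θ i.succ * θ 0) := fun i => by
      rw [hθ0, hθ_succ, neg_mul, mul_neg,
        mul_mul_add_mul_eq_neg hδ2 hδs (hδθe i) (hδc.mul_right (hδue i)) (hθes i)]
    have hδS : Commute δ (s ^ (m - 2 * k - 1)) := hδs.pow_right _
    have hpyth : ∀ Φ : A, c * (δ * (c * s ^ (m - 2 * k - 1) * Φ))
        + s * (δ * (s * s ^ (m - 2 * k - 1) * Φ)) = s ^ (m - 2 * k - 1) * δ * Φ := fun Φ => by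
      rw [mul_assoc c, hδc.left_comm, mul_assoc s, hδs.left_comm, ← mul_assoc c, ← mul_assoc s,
        ← pow_two, ← pow_two, ← add_mul, add_comm, hsc, one_mul, ← mul_assoc, hδS.eq]
    rw [chernPhi_succ hk hθ0u hθ0θ hΩ'0]
    simp only [hu0, hθ0, hui, hθ_succ, neg_mul, mul_assoc s δ]
    rw [chernPsi_mul_add_mul hk hs_c hδ2 hδs hδc hδθe hδue hsue hθes hθec hθeue,
      mul_chernPhi_mul_add_mul hk hδ2 hδs hδθe hδue hsue hθes, smul_neg, sub_neg_eq_add, mul_add,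
      mul_smul_comm, add_assoc, ← smul_add, hpyth, ← mul_assoc, (hs_c.symm.pow_right _).eq]
  · subst hk
    rw [← hu0]
    exact chernPhi_succ_self u θ hΩ'0 θe

/-- On the boundary tangent sphere bundle with a locally product metric, with `s = sin φ`,
`c = cos φ`, `δ = dφ`, and `u₁ = c`, `u_i = s·uᵉ_i`, `θ₁ = −s·δ`, `θ_i = s·θᵉ_i + c·δ·uᵉ_i`,
`Ω_{1j} = Ω_{j1} = 0`, one has
`Φ_k = s^{n−2k−1}·c·Ψᵉ_k + (n−2k−1)·s^{n−2k−2}·δ·Φᵉ_k` for `0 ≤ k ≤ ⌊(n−2)/2⌋`, and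
`Φ_{(n−1)/2} = c·Ψᵉ_{(n−1)/2}` when `n` is odd. -/
theorem chernPhi_pullback_formula (n : ℕ) (hn : 2 ≤ n) {A : Type*} [Ring A]
    (s c δ : A) (ue θe : Fin (n - 1) → A) (Ω : Fin (n - 1) → Fin (n - 1) → A)
    (hs : ∀ a : A, Commute s a) (hc : ∀ a : A, Commute c a)
    (hsc : s ^ 2 + c ^ 2 = 1)
    (hδ2 : δ * δ = 0)
    (hδθe : ∀ i : Fin (n - 1), δ * θe i = -(θe i * δ))
    (hδs : Commute δ s) (hδc : Commute δ c)
    (hδue : ∀ i : Fin (n - 1), Commute δ (ue i))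
    (hδΩ : ∀ i j : Fin (n - 1), Commute δ (Ω i j))
    (hue : ∀ (i : Fin (n - 1)) (a : A), Commute (ue i) a)
    (hθe : ∀ i j : Fin (n - 1), i ≠ j → θe i * θe j = -(θe j * θe i))
    (hθe2 : ∀ i : Fin (n - 1), θe i * θe i = 0)
    (hθes : ∀ i : Fin (n - 1), Commute (θe i) s)
    (hθec : ∀ i : Fin (n - 1), Commute (θe i) c)
    (hθeue : ∀ i j : Fin (n - 1), Commute (θe i) (ue j))
    (hθeΩ : ∀ (i j k : Fin (n - 1)), Commute (θe i) (Ω j k))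
    (hΩc : ∀ (i j : Fin (n - 1)) (a : A), Commute (Ω i j) a)
    (hΩa : ∀ i j : Fin (n - 1), Ω i j = -Ω j i)
    (u θ : Fin n → A) (Ω' : Fin n → Fin n → A)
    (hu0 : u ⟨0, by omega⟩ = c)
    (hui : ∀ i : Fin (n - 1), u (embSucc n i) = s * ue i)
    (hθ0 : θ ⟨0, by omega⟩ = -(s * δ))
    (hθi : ∀ i : Fin (n - 1), θ (embSucc n i) = s * θe i + c * δ * ue i)
    (hΩ'0 : ∀ j : Fin n, Ω' ⟨0, by omega⟩ j = 0 ∧ Ω' j ⟨0, by omega⟩ = 0)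
    (hΩ'i : ∀ i j : Fin (n - 1), Ω' (embSucc n i) (embSucc n j) = Ω i j) :
    (∀ k, ∀ hk : k ≤ (n - 2) / 2,
      chernPhi n k (by omega) u θ Ω'
        = s ^ (n - 2 * k - 1) * c * chernPsi (n - 1) k (by omega) θe Ω
          + (n - 2 * k - 1) •
            (s ^ (n - 2 * k - 2) * δ * chernPhi (n - 1) k (by omega) ue θe Ω)) ∧
    (Odd n →
      chernPhi n ((n - 1) / 2) (by omega) u θ Ω'
        = c * chernPsi (n - 1) ((n - 1) / 2) (by omega) θe Ω) := by
  obtain ⟨m, rfl⟩ : ∃ m, n = m + 1 := ⟨n - 1, by omega⟩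
  obtain ⟨h, hodd⟩ := chernPhi_pullback_formula_general m s c δ ue θe Ω (hs c) hsc hδ2 hδθe hδs hδc
    hδue (fun i => hs (ue i)) hθes hθec hθeue u θ Ω' hu0 hui hθ0 hθi hΩ'0 hΩ'i
  refine ⟨fun k hk => ?_, fun ⟨k, hk⟩ => hodd _ (by omega)⟩
  have h₁ : m + 1 - 2 * k - 1 = m - 2 * k := by omega
  have h₂ : m + 1 - 2 * k - 2 = m - 2 * k - 1 := by omega
  rw [h₁, h₂]
  exact h k (by omega)
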